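/- Let λ₁ > λ₂ > λ₃ > λ₄ be real numbers with λᵢ+λⱼ > 0 for all i ≠ j and λ₁²+λ₄² ≠ λ₂²+λ₃². Define f̃(t) = S̃₂t² + T̃₂t + Ũ₂ where S̃₂ = (λ₁²−λ₄²)², Ũ₂ = (λ₂²−λ₃²)², T̃₂ = −2[(λ₁²−λ₂²)(λ₃²−λ₄²) + (λ₁²−λ₃²)(λ₂²−λ₄²)], and define α₃ = [(λ₁²−λ₂²)(λ₂²−λ₄²) + (λ₁²−λ₃²)(λ₃²−λ₄²)] / [(λ₁²−λ₂²)(λ₁²−λ₃²) + (λ₂²−λ₄²)(λ₃²−λ₄²)]. Then: the discriminant of f̃ equals 16(λ₁²−λ₂²)(λ₁²−λ₃²)(λ₂²−λ₄²)(λ₃²−λ₄²) > 0, so f̃ has two distinct real roots α₁ < α₂; moreover f̃(α₃) < 0, f̃(1) > 0, and the strict ordering 0 < α₁ < α₃ < α₂ < 1 holds. -/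

import Mathlib

/-!
In terms of the gaps `x = λ₁² - λ₂²`, `y = λ₂² - λ₃²`, `z = λ₃² - λ₄²`, all positive, and
`P = x + y + z`, the quadratic is `f t = (P t - y)² - 4 x z t`. Hence `f 1 = (x - z)²`, which is
positive because the genericity hypothesis says `x ≠ z`. Writing `α₃ = N / D`, one finds
`P N - y D = 2 x z (P + y)` and then
`D² f(α₃) = -4 x z (x + y) (y + z) (x - z)² < 0`.
The ordering follows from the factorization `f t = S (t - α₁) (t - α₂)`: a negative value at `α₃`
puts it between the roots, the signs of the product and the sum of the roots give `0 < α₁`, and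
`f 1 > 0` together with `α₁ + α₂ < 2` gives `α₂ < 1`.
-/

/-- A real quadratic with positive leading coefficient and positive discriminant has two
distinct roots, recorded here through their sum and product (equivalently, the factorization
`S t² + T t + U = S (t - a) (t - b)`). -/
lemma exists_factor_of_discrim_pos (S T U : ℝ) (hS : 0 < S) (hd : 0 < T^2 - 4*S*U) :
    ∃ a b : ℝ, a < b ∧ S * (a + b) = -T ∧ S * (a * b) = U := by
  have hr := Real.sqrt_pos.mpr hd
  have hr2 := Real.sq_sqrt hd.le
  set r := Real.sqrt (T^2 - 4*S*U)
  refine ⟨(-T - r) / (2*S), (-T + r) / (2*S), ?_, ?_, ?_⟩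
  · exact div_lt_div_of_pos_right (by linarith) (by linarith)
  · field_simp
    ring
  · field_simp
    linarith

/-- The value of the quadratic at `α₃`, in terms of the gaps, with denominators cleared. -/
lemma gap_quadratic_at_ratio (x y z : ℝ)
    (hD : x*(x+y) + (y+z)*z ≠ 0) :
    ((x+y+z)^2 * ((x*(y+z) + (x+y)*z) / (x*(x+y) + (y+z)*z))^2
      + (-2*(x*z + (x+y)*(y+z))) * ((x*(y+z) + (x+y)*z) / (x*(x+y) + (y+z)*z)) + y^2)
      * (x*(x+y) + (y+z)*z)^2 = -(4*x*z*(x+y)*(y+z)*(x-z)^2) := by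
  have h := div_mul_cancel₀ (x*(y+z) + (x+y)*z) hD
  set t := (x*(y+z) + (x+y)*z) / (x*(x+y) + (y+z)*z)
  linear_combination ((x+y+z)^2 * (t * (x*(x+y) + (y+z)*z) + (x*(y+z) + (x+y)*z))
    + (-2*(x*z + (x+y)*(y+z))) * (x*(x+y) + (y+z)*z)) * h

/-- properties of the quadratic `f̃(t) = S̃₂t² + T̃₂t + Ũ₂`:
its discriminant equals `16(λ₁²−λ₂²)(λ₁²−λ₃²)(λ₂²−λ₄²)(λ₃²−λ₄²) > 0`, it has
exactly two distinct real roots `α₁ < α₂`, `f̃(α₃) < 0`, `f̃(1) > 0`, and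
`0 < α₁ < α₃ < α₂ < 1`. -/
theorem stmt12 (l1 l2 l3 l4 : ℝ)
    (h12 : l2 < l1) (h23 : l3 < l2) (h34 : l4 < l3)
    (hp12 : 0 < l1 + l2) (hp13 : 0 < l1 + l3) (hp14 : 0 < l1 + l4)
    (hp23 : 0 < l2 + l3) (hp24 : 0 < l2 + l4) (hp34 : 0 < l3 + l4)
    (hgen : l1^2 + l4^2 ≠ l2^2 + l3^2) :
    let S := (l1^2-l4^2)^2
    let T := -2*((l1^2-l2^2)*(l3^2-l4^2) + (l1^2-l3^2)*(l2^2-l4^2))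
    let U := (l2^2-l3^2)^2
    let f : ℝ → ℝ := fun t => S*t^2 + T*t + U
    let α₃ := ((l1^2-l2^2)*(l2^2-l4^2) + (l1^2-l3^2)*(l3^2-l4^2)) /
        ((l1^2-l2^2)*(l1^2-l3^2) + (l2^2-l4^2)*(l3^2-l4^2))
    (T^2 - 4*S*U = 16*(l1^2-l2^2)*(l1^2-l3^2)*(l2^2-l4^2)*(l3^2-l4^2)) ∧
    (0 < T^2 - 4*S*U) ∧
    ∃ α₁ α₂ : ℝ, α₁ < α₂ ∧ (∀ t : ℝ, f t = 0 ↔ t = α₁ ∨ t = α₂) ∧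
      f α₃ < 0 ∧ 0 < f 1 ∧
      0 < α₁ ∧ α₁ < α₃ ∧ α₃ < α₂ ∧ α₂ < 1 := by
  intro S T U f α₃
  obtain ⟨x, hx⟩ : ∃ x, x = l1^2 - l2^2 := ⟨_, rfl⟩
  obtain ⟨y, hy⟩ : ∃ y, y = l2^2 - l3^2 := ⟨_, rfl⟩
  obtain ⟨z, hz⟩ : ∃ z, z = l3^2 - l4^2 := ⟨_, rfl⟩
  have x0 : 0 < x := by nlinarith
  have y0 : 0 < y := by nlinarith
  have z0 : 0 < z := by nlinarith
  have hxz : 0 < (x - z)^2 := by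
    refine sq_pos_iff.mpr fun h => hgen ?_
    rw [hx, hz] at h
    linarith
  have e13 : l1^2 - l3^2 = x + y := by rw [hx, hy]; ring
  have e24 : l2^2 - l4^2 = y + z := by rw [hy, hz]; ring
  have e14 : l1^2 - l4^2 = x + y + z := by rw [hx, hy, hz]; ring
  have hSe : S = (x+y+z)^2 := by simp only [S, e14]
  have hTe : T = -2*(x*z + (x+y)*(y+z)) := by simp only [T, e13, e24, ← hx, ← hz]
  have hUe : U = y^2 := by simp only [U, ← hy]
  have hαe : α₃ = (x*(y+z) + (x+y)*z) / (x*(x+y) + (y+z)*z) := by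
    simp only [α₃, e13, e24, ← hx, ← hz]
  have hfe : ∀ t, f t = S*t^2 + T*t + U := fun t => rfl
  rw [e13, e24, ← hx, ← hz]
  clear_value f α₃ S T U
  have hdisc : T^2 - 4*S*U = 16*x*(x+y)*(y+z)*z := by
    rw [hSe, hTe, hUe]; ring
  have hdpos : 0 < T^2 - 4*S*U := by rw [hdisc]; positivity
  have hS : 0 < S := by rw [hSe]; positivity
  refine ⟨hdisc, hdpos, ?_⟩
  obtain ⟨a, b, hab, hsum, hprod⟩ := exists_factor_of_discrim_pos S T U hS hdpos
  have hfac : ∀ t, f t = S * ((t - a) * (t - b)) := by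
    intro t
    rw [hfe]
    linear_combination t * hsum - hprod
  have hD : 0 < x*(x+y) + (y+z)*z := by positivity
  have hf3 : f α₃ < 0 := by
    have key := gap_quadratic_at_ratio x y z hD.ne'
    rw [← hαe, ← hSe, ← hTe, ← hUe, ← hfe] at key
    have hneg : f α₃ * (x*(x+y) + (y+z)*z)^2 < 0 := by
      rw [key]
      exact neg_neg_of_pos (by positivity)
    exact neg_of_mul_neg_left hneg (by positivity)
  have hf1 : 0 < f 1 := by
    have : f 1 = (x - z)^2 := by rw [hfe, hSe, hTe, hUe]; ring
    rwa [this]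
  have hab0 : 0 < a * b := by
    have : 0 < S * (a * b) := by rw [hprod, hUe]; positivity
    exact pos_of_mul_pos_right this hS.le
  have hs0 : 0 < a + b := by
    have : 0 < S * (a + b) := by
      rw [hsum, hTe]
      have : 0 < x*z + (x+y)*(y+z) := by positivity
      linarith
    exact pos_of_mul_pos_right this hS.le
  have hs2 : a + b < 2 := by
    -- `2 S + T = 2 (P² - 2 x z - y P)`, a sum of positive terms in the gaps
    have : 0 < S * (2 - (a + b)) := by
      have e : S * (2 - (a + b)) = 2*(x^2 + z^2 + x*y + y*z) := by
        have : S * (2 - (a + b)) = 2 * S + T := by linear_combination -hsum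
        rw [this, hSe, hTe]; ring
      rw [e]; positivity
    linarith [pos_of_mul_pos_right this hS.le]
  have h3 : (α₃ - a) * (α₃ - b) < 0 := by
    rw [hfac] at hf3
    exact neg_of_mul_neg_right hf3 hS.le
  have h1 : 0 < (1 - a) * (1 - b) := by
    rw [hfac] at hf1
    exact pos_of_mul_pos_right hf1 hS.le
  refine ⟨a, b, hab, ?_, hf3, hf1, ?_, ?_, ?_, ?_⟩
  · intro t
    rw [hfac, mul_eq_zero, mul_eq_zero, sub_eq_zero, sub_eq_zero]
    exact or_iff_right hS.ne'
  · by_contra! h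
    linarith [mul_nonpos_of_nonpos_of_nonneg h (show 0 ≤ b by linarith)]
  · by_contra! h
    linarith [mul_nonneg_of_nonpos_of_nonpos (sub_nonpos.mpr h) (show α₃ - b ≤ 0 by linarith)]
  · by_contra! h
    linarith [mul_nonneg (show 0 ≤ α₃ - a by linarith) (sub_nonneg.mpr h)]
  · by_contra! h
    linarith [mul_nonpos_of_nonneg_of_nonpos (show 0 ≤ 1 - a by linarith) (sub_nonpos.mpr h)]
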